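/- arXiv:2308.02709 — 5 statements merged into one kernel-verified Lean document; each statement's English description precedes it below -/
import Mathlib

section
/- For every response function value r ∈ R, the outcome of the query is unchanged if non-critical intervention variables are dropped: F_O((q_A, q_I), r) = F_O((q_A, q_{I ∩ C(Q)}), r); consequently R_Q equals R_{Q'}, where Q' is the query with intervention set I ∩ C(Q) in place of I (i.e., P(V_O(V_I = q_I)=q_O | V_A=q_A) = P(V_O(V_{I∩C(Q)} = q_{I∩C(Q)})=q_O | V_A=q_A)). -/
open Classical

/-- A partitioned causal graph on binary variables `V_0, …, V_{n-1}`, listed in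
topologically sorted order.  Indices `< a` form the index set `A` (context
variables, which have no parents and topologically precede the rest), indices
`≥ a` form the index set `B`.  `parents j` is the set of indices of `pa(V_j)`. -/
structure CausalGraph where
  n : ℕ
  a : ℕ
  a_le : a ≤ n
  parents : Fin n → Finset (Fin n)
  sorted : ∀ j i : Fin n, i ∈ parents j → i < j
  noParentsA : ∀ j : Fin n, j.val < a → parents j = ∅

namespace CausalGraph

variable (G : CausalGraph)

/-- Indices of the `A` (context) variables. -/
abbrev AIdx := {i : Fin G.n // i.val < G.a}

/-- Indices of the `B` variables. -/
abbrev BIdx := {i : Fin G.n // G.a ≤ i.val}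

/-- Assignments of binary values to the `A` variables (`{0,1}^{|A|}`). -/
abbrev AAssign := G.AIdx → Bool

/-- Assignments of binary values to the `B` variables (`{0,1}^{|B|}`). -/
abbrev BAssign := G.BIdx → Bool

/-- A family of candidate response functions, one for each node, each reading a
full assignment of all variables. -/
abbrev Resp := Fin G.n → ((Fin G.n → Bool) → Bool)

/-- A response family is admissible when each component depends only on the
values of the parents of the corresponding node.  This encodes membership in
`R = ∏_{j∈B} F_j`, where `F_j` is the set of ALL functions from values of
`pa(V_j)` to `{0,1}`. -/
def IsResponse (r : G.Resp) : Prop :=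
  ∀ j : Fin G.n, ∀ v w : Fin G.n → Bool, (∀ i ∈ G.parents j, v i = w i) → r j v = r j w

/-- The response-function set `R`. -/
def R : Set G.Resp := {r | G.IsResponse r}

/-- One step of evaluation: `A` variables read the context, `B` variables apply
their response functions to the current assignment. -/
def evalStep (r : G.Resp) (vA : G.AAssign) (v : Fin G.n → Bool) : Fin G.n → Bool :=
  fun j => if h : j.val < G.a then vA ⟨j, h⟩ else r j v

/-- Evaluation of all variables from the context `vA` and the response family
`r`, in topological order (realized by `n`-fold iteration of `evalStep`, which
is exact since each parent index precedes its child's index). -/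
def eval (r : G.Resp) (vA : G.AAssign) : Fin G.n → Bool :=
  (G.evalStep r vA)^[G.n] (fun _ => false)

/-- `F_B(v_A, r)`: the values of the `B` variables determined by `v_A` and `r`. -/
def FB (r : G.Resp) (vA : G.AAssign) : G.BAssign := fun j => G.eval r vA j.1

/-- A hyperarc `h : {0,1}^{|A|} → {0,1}^{|B|}`. -/
abbrev Hyperarc := G.AAssign → G.BAssign

/-- `R_h`: the admissible responses consistent with hyperarc `h` on every input. -/
def Rh (h : G.Hyperarc) : Set G.Resp :=
  {r ∈ G.R | ∀ vA : G.AAssign, G.FB r vA = h vA}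

/-- A hyperarc is valid when `R_h ≠ ∅`. -/
def Valid (h : G.Hyperarc) : Prop := (G.Rh h).Nonempty

/-- The set `H` of valid hyperarcs. -/
def H : Set G.Hyperarc := {h | G.Valid h}

/-- `R_{v_B.v_A}`: responses mapping the context `v_A` to the values `v_B` of `V_B`. -/
def RvBvA (vA : G.AAssign) (vB : G.BAssign) : Set G.Resp :=
  {r ∈ G.R | G.FB r vA = vB}

/-- Restriction of a full assignment to the `A` variables. -/
def restrictA (v : Fin G.n → Bool) : G.AAssign := fun i => v i.1

/-- Restriction of a full assignment to the `B` variables. -/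
def restrictB (v : Fin G.n → Bool) : G.BAssign := fun j => v j.1

/-- The full assignment determined by a context `vA` and a hyperarc `h`. -/
def extendA (h : G.Hyperarc) (vA : G.AAssign) : Fin G.n → Bool :=
  fun i => if hi : i.val < G.a then vA ⟨i, hi⟩ else h vA ⟨i, not_lt.mp hi⟩

/-- One step of evaluation under the intervention `do(V_I = q_I)`: the
mechanisms of the intervened variables are ignored. -/
def evalDoStep (I : Finset (Fin G.n)) (qI : Fin G.n → Bool) (r : G.Resp)
    (qA : G.AAssign) (v : Fin G.n → Bool) : Fin G.n → Bool :=
  fun j => if h : j.val < G.a then qA ⟨j, h⟩ else if j ∈ I then qI j else r j v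

/-- Evaluation of all variables under the intervention `do(V_I = q_I)`,
in context `V_A = q_A`, using the response family `r`. -/
def evalDo (I : Finset (Fin G.n)) (qI : Fin G.n → Bool) (r : G.Resp)
    (qA : G.AAssign) : Fin G.n → Bool :=
  (G.evalDoStep I qI r qA)^[G.n] (fun _ => false)

/-- A causal query `P(V_O(V_I = q_I) = q_O | V_A = q_A)`: disjoint sets
`O, I ⊆ B` together with the values `q_A`, `q_I`, `q_O`. -/
structure Query (G : CausalGraph) where
  O : Finset (Fin G.n)
  I : Finset (Fin G.n)
  O_sub : ∀ j ∈ O, G.a ≤ j.val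
  I_sub : ∀ j ∈ I, G.a ≤ j.val
  disjOI : Disjoint O I
  qA : G.AAssign
  qI : Fin G.n → Bool
  qO : Fin G.n → Bool

/-- `R_Q`: the admissible responses consistent with the query, i.e. those with
`F_O((q_A, q_I), r) = q_O`. -/
def RQ (Q : G.Query) : Set G.Resp :=
  {r ∈ G.R | ∀ j ∈ Q.O, G.evalDo Q.I Q.qI r Q.qA j = Q.qO j}

/-- Edges of the mutilated graph `G^{do(V_I = q_I)}` (all edges into `V_I` deleted). -/
def doEdge (I : Finset (Fin G.n)) (i j : Fin G.n) : Prop := j ∉ I ∧ i ∈ G.parents j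

/-- `C(Q)`: the critical variables for the query, i.e. those with a directed
path to some variable of `V_O` in the mutilated graph `G^{do(V_I = q_I)}`. -/
def critical (Q : G.Query) : Set (Fin G.n) :=
  {i | ∃ o ∈ Q.O, Relation.ReflTransGen (G.doEdge Q.I) i o}

/-- An observation `{V_W = q_W}` with `W ⊆ B`, in context `V_A = q_A`. -/
structure Obs (G : CausalGraph) where
  W : Finset (Fin G.n)
  W_sub : ∀ j ∈ W, G.a ≤ j.val
  qA : G.AAssign
  qW : Fin G.n → Bool

/-- `R_W`: the admissible responses consistent with the observation, i.e. those
with `F_W(q_A, r) = q_W`. -/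
def RW (Ob : G.Obs) : Set G.Resp :=
  {r ∈ G.R | ∀ j ∈ Ob.W, G.eval r Ob.qA j = Ob.qW j}

/-- Edges of the causal graph `G` itself. -/
def edge (i j : Fin G.n) : Prop := i ∈ G.parents j

/-- `C(W)`: the critical variables for the observation: the `A`-variables with
a directed path in `G` to some variable of `V_W`. -/
def criticalW (Ob : G.Obs) : Set (Fin G.n) :=
  {i | i.val < G.a ∧ ∃ w ∈ Ob.W, Relation.ReflTransGen G.edge i w}

end CausalGraph

open CausalGraph

/-- The sum `Σ_{x ∈ s} f x` of `f` over a subset `s` of a finite type. -/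
noncomputable def setSum {α : Type*} [Fintype α] (s : Set α) (f : α → ℝ) : ℝ :=
  ∑ x : α, if x ∈ s then f x else 0

namespace CausalGraph

/-- Dropping non-critical interventions does not change the critical variables at any stage of
the evaluation. -/
theorem evalDoStep_iterate_eq_of_mem_critical (G : CausalGraph) (Q : G.Query)
    {I' : Finset (Fin G.n)} (hI' : ∀ i, i ∈ I' ↔ i ∈ Q.I ∧ i ∈ G.critical Q)
    {r : G.Resp} (hr : r ∈ G.R) (v : Fin G.n → Bool) (k : ℕ) :
    ∀ j ∈ G.critical Q, (G.evalDoStep Q.I Q.qI r Q.qA)^[k] v j =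
      (G.evalDoStep I' Q.qI r Q.qA)^[k] v j := by
  induction k with
  | zero => exact fun _ _ => rfl
  | succ k ih =>
    intro j hj
    rw [Function.iterate_succ_apply', Function.iterate_succ_apply']
    have hmem : j ∈ I' ↔ j ∈ Q.I := by simp [hI', hj]
    simp only [evalDoStep, hmem]
    split_ifs with hA hI
    · rfl
    · rfl
    · refine hr j _ _ fun i hi => ih i ?_
      obtain ⟨o, ho, hjo⟩ := hj
      exact ⟨o, ho, hjo.head ⟨hI, hi⟩⟩

end CausalGraph

/-- For every response function value `r ∈ R`, the outcome of the
query is unchanged if non-critical intervention variables are dropped: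
`F_O((q_A, q_I), r) = F_O((q_A, q_{I ∩ C(Q)}), r)`; consequently `R_Q = R_{Q'}`
where `Q'` uses the intervention set `I ∩ C(Q)` in place of `I`. -/
theorem critical_intervention (G : CausalGraph) (Q : G.Query)
    (I' : Finset (Fin G.n)) (hI' : ∀ i, i ∈ I' ↔ i ∈ Q.I ∧ i ∈ G.critical Q) :
    (∀ r ∈ G.R, ∀ j ∈ Q.O,
        G.evalDo Q.I Q.qI r Q.qA j = G.evalDo I' Q.qI r Q.qA j) ∧
      G.RQ Q = {r ∈ G.R | ∀ j ∈ Q.O, G.evalDo I' Q.qI r Q.qA j = Q.qO j} := by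
  have hO : ∀ r ∈ G.R, ∀ j ∈ Q.O,
      G.evalDo Q.I Q.qI r Q.qA j = G.evalDo I' Q.qI r Q.qA j := fun r hr j hj =>
    G.evalDoStep_iterate_eq_of_mem_critical Q hI' hr _ G.n j ⟨j, hj, .refl⟩
  refine ⟨hO, Set.ext fun r => and_congr_right fun hr => forall₂_congr fun j hj => ?_⟩
  rw [hO r hr j hj]
end

section
/- (Valid hyperarcs) A hyperarc h is valid (i.e., R_h ≠ ∅) if, and only if, for all a_A, b_A ∈ {0,1}^{|A|}, writing a = (a_A, a_B) with a_B = h(a_A) and b = (b_A, b_B) with b_B = h(b_A), and for every j ∈ B with P_j ⊆ N denoting the indices of pa(V_j): a_{P_j} = b_{P_j} implies a_j = b_j. -/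
open Classical

open CausalGraph

namespace CausalGraph

variable {G : CausalGraph}

/-- After `k` evaluation steps, the first `k` variables no longer depend on the
initial assignment. -/
theorem iterate_evalStep_congr {r : G.Resp} (hr : G.IsResponse r) (vA : G.AAssign)
    (v w : Fin G.n → Bool) (k : ℕ) (j : Fin G.n) (hj : j.val < k) :
    (G.evalStep r vA)^[k] v j = (G.evalStep r vA)^[k] w j := by
  induction k generalizing j with
  | zero => exact absurd hj (Nat.not_lt_zero _)
  | succ k ih =>
    simp only [Function.iterate_succ_apply', evalStep]
    split_ifs
    · rfl
    · refine hr j _ _ fun i hi => ih i ?_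
      have := Fin.lt_def.mp (G.sorted j i hi)
      omega

/-- `eval r vA` is the unique fixed point of `evalStep r vA`. -/
theorem eval_eq_iff {r : G.Resp} (hr : G.IsResponse r) (vA : G.AAssign)
    (w : Fin G.n → Bool) : G.eval r vA = w ↔ G.evalStep r vA w = w := by
  have eval_eq (v : Fin G.n → Bool) : G.eval r vA = (G.evalStep r vA)^[G.n] v :=
    funext fun j => iterate_evalStep_congr hr vA _ v G.n j j.isLt
  constructor
  · rintro rfl
    conv_lhs => rw [eval, ← Function.iterate_succ_apply' (G.evalStep r vA)]
    rw [Function.iterate_succ_apply, ← eval_eq]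
  · intro hw
    rw [eval_eq w, Function.iterate_fixed hw]

theorem evalStep_extendA_eq_iff (r : G.Resp) (h : G.Hyperarc) (vA : G.AAssign) :
    G.evalStep r vA (G.extendA h vA) = G.extendA h vA ↔
      ∀ j : G.BIdx, r j.1 (G.extendA h vA) = h vA j := by
  constructor
  · intro hfix j
    have := congrFun hfix j.1
    rwa [evalStep, dif_neg (not_lt.mpr j.2), extendA, dif_neg (not_lt.mpr j.2)] at this
  · intro hB
    funext j
    by_cases hj : j.val < G.a
    · simp [evalStep, extendA, hj]
    · rw [evalStep, dif_neg hj, hB ⟨j, not_lt.mp hj⟩, extendA, dif_neg hj]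

theorem eval_apply_of_lt {r : G.Resp} (hr : G.IsResponse r) (vA : G.AAssign)
    (j : Fin G.n) (hj : j.val < G.a) : G.eval r vA j = vA ⟨j, hj⟩ := by
  rw [← (eval_eq_iff hr vA _).mp rfl, evalStep, dif_pos hj]

theorem FB_eq_iff {r : G.Resp} (hr : G.IsResponse r) (h : G.Hyperarc) (vA : G.AAssign) :
    G.FB r vA = h vA ↔ ∀ j : G.BIdx, r j.1 (G.extendA h vA) = h vA j := by
  rw [← evalStep_extendA_eq_iff, ← eval_eq_iff hr]
  constructor
  · intro hFB
    funext j
    by_cases hj : j.val < G.a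
    · rw [eval_apply_of_lt hr vA j hj, extendA, dif_pos hj]
    · rw [extendA, dif_neg hj, ← hFB, FB]
  · intro heval
    funext j
    rw [FB, heval, extendA, dif_neg (not_lt.mpr j.2)]

end CausalGraph

/-- Valid hyperarcs: a hyperarc `h` is valid (`R_h ≠ ∅`) iff for
all `a_A, b_A ∈ {0,1}^{|A|}` — writing `a = (a_A, h(a_A))`, `b = (b_A, h(b_A))` —
and every `j ∈ B`: `a_{P_j} = b_{P_j}` implies `a_j = b_j`. -/
theorem valid_hyperarc_iff (G : CausalGraph) (h : G.Hyperarc) :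
    G.Valid h ↔ ∀ aA bA : G.AAssign, ∀ j : G.BIdx,
      (∀ i ∈ G.parents j.1, G.extendA h aA i = G.extendA h bA i) →
      h aA j = h bA j := by
  constructor
  · rintro ⟨r, hr, hFB⟩ aA bA j hpar
    rw [← (FB_eq_iff hr h aA).mp (hFB aA) j, ← (FB_eq_iff hr h bA).mp (hFB bA) j]
    exact hr j.1 _ _ hpar
  · intro hcompat
    let r : G.Resp := fun j v => decide (∃ (hj : G.a ≤ j.val) (vA : G.AAssign),
      (∀ i ∈ G.parents j, G.extendA h vA i = v i) ∧ h vA ⟨j, hj⟩ = true)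
    have hr : G.IsResponse r := by
      intro j v w hvw
      have hiff (vA : G.AAssign) : (∀ i ∈ G.parents j, G.extendA h vA i = v i) ↔
          ∀ i ∈ G.parents j, G.extendA h vA i = w i :=
        forall₂_congr fun i hi => by rw [hvw i hi]
      simp only [r, hiff]
    refine ⟨r, hr, fun vA => (FB_eq_iff hr h vA).mpr fun j => ?_⟩
    rw [Bool.eq_iff_iff, decide_eq_true_iff]
    constructor
    · rintro ⟨_, bA, hpar, hb⟩
      rwa [← hcompat bA vA j hpar]
    · exact fun hv => ⟨j.2, vA, fun _ _ => rfl, hv⟩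
end

section
/- (Equivalence of the original and pruned lower-bound LPs) The optimal value of the original lower-bound LP, min{ Σ_{r ∈ R_Q} q_r : Σ_{r ∈ R_{v_B.v_A}} q_r = p_{v_B.v_A} for all (v_A, v_B), q ≥ 0 }, equals the optimal value of the pruned LP, min{ Σ_{h ∈ H} c_h^L q_h : Σ_{h ∈ H: h(v_A) = v_B} q_h = p_{v_B.v_A} for all (v_A, v_B), q ≥ 0 }, where c_h^L = 1{R_h ⊆ R_Q}. (In particular, one LP is feasible if and only if the other is, and feasible points of one can be mapped to feasible points of the other with equal or no larger objective value.) -/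
open Classical

open CausalGraph

section Pushforward

variable {α β : Type*} [Fintype α]

theorem setSum_nonneg (s : Set α) {f : α → ℝ} (hf : ∀ x, 0 ≤ f x) : 0 ≤ setSum s f :=
  Finset.sum_nonneg fun x _ => by split_ifs <;> simp [hf]

theorem setSum_mono {s t : Set α} (hst : s ⊆ t) {f : α → ℝ} (hf : ∀ x, 0 ≤ f x) :
    setSum s f ≤ setSum t f := by
  refine Finset.sum_le_sum fun x _ => ?_
  by_cases hs : x ∈ s
  · simp [hs, hst hs]
  · rw [if_neg hs]
    split_ifs <;> simp [hf]

/-- The pushforward along `g` of the weights `f` restricted to `t`. -/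
noncomputable def pushWeight (t : Set α) (g : α → β) (f : α → ℝ) (y : β) : ℝ :=
  setSum {x ∈ t | g x = y} f

theorem setSum_pushWeight [Fintype β] (t : Set α) (g : α → β) (f : α → ℝ) (s : Set β) :
    setSum s (pushWeight t g f) = setSum {x ∈ t | g x ∈ s} f := by
  have h (y : β) : (if y ∈ s then pushWeight t g f y else 0) =
      ∑ x, if y = g x then (if x ∈ t ∧ g x ∈ s then f x else 0) else 0 := by
    by_cases hy : y ∈ s
    · rw [if_pos hy]
      refine Finset.sum_congr rfl fun x _ => ?_
      by_cases hx : y = g x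
      · subst hx
        simp [hy]
      · simp [hx, Ne.symm hx]
    · rw [if_neg hy]
      refine (Finset.sum_eq_zero fun x _ => ?_).symm
      by_cases hx : y = g x
      · subst hx
        simp [hy]
      · simp [hx]
  unfold setSum
  rw [Finset.sum_congr rfl fun y _ => h y, Finset.sum_comm]
  refine Finset.sum_congr rfl fun x _ => ?_
  rw [Finset.sum_ite_eq', if_pos (Finset.mem_univ _)]
  congr

end Pushforward

theorem sInf_le_sInf_of_mutual_domination {S T : Set ℝ} (hS : BddBelow S)
    (hST : ∀ x ∈ S, ∃ y ∈ T, y ≤ x) (hTS : ∀ y ∈ T, ∃ x ∈ S, x ≤ y) :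
    sInf S ≤ sInf T := by
  rcases T.eq_empty_or_nonempty with rfl | hT
  · rcases S.eq_empty_or_nonempty with rfl | ⟨x, hx⟩
    · exact le_rfl
    · obtain ⟨y, hy, -⟩ := hST x hx
      exact hy.elim
  · refine le_csInf hT fun y hy => ?_
    obtain ⟨x, hx, hxy⟩ := hTS y hy
    exact (csInf_le hS hx).trans hxy

namespace CausalGraph

variable (G : CausalGraph)

theorem mem_Rh_FB {r : G.Resp} (hr : r ∈ G.R) : r ∈ G.Rh (G.FB r) :=
  ⟨hr, fun _ => rfl⟩

/-- Every valid hyperarc has a representative response which avoids `S` whenever possible. -/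
theorem exists_representative (S : Set G.Resp) :
    ∃ s : G.Hyperarc → G.Resp, ∀ h ∈ G.H, s h ∈ G.Rh h ∧ (s h ∈ S → G.Rh h ⊆ S) := by
  have key (h : G.Hyperarc) : ∃ r : G.Resp, h ∈ G.H → r ∈ G.Rh h ∧ (r ∈ S → G.Rh h ⊆ S) := by
    by_cases hS : G.Rh h ⊆ S
    · by_cases hh : h ∈ G.H
      · obtain ⟨r, hr⟩ : (G.Rh h).Nonempty := hh
        exact ⟨r, fun _ => ⟨hr, fun _ => hS⟩⟩
      · exact ⟨fun _ _ => false, fun h' => absurd h' hh⟩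
    · obtain ⟨r, hr, hrS⟩ := Set.not_subset.mp hS
      exact ⟨r, fun _ => ⟨hr, fun h' => absurd h' hrS⟩⟩
  choose s hs using key
  exact ⟨s, hs⟩

theorem exists_hyperarc_weight (S : Set G.Resp) (p : G.AAssign → G.BAssign → ℝ)
    (q : G.Resp → ℝ) (hq : ∀ r, 0 ≤ q r)
    (hp : ∀ vA vB, setSum (G.RvBvA vA vB) q = p vA vB) :
    ∃ qh : G.Hyperarc → ℝ, (∀ h, 0 ≤ qh h) ∧
      (∀ vA vB, setSum {h ∈ G.H | h vA = vB} qh = p vA vB) ∧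
      setSum {h ∈ G.H | G.Rh h ⊆ S} qh ≤ setSum S q := by
  refine ⟨pushWeight G.R G.FB q, fun _ => setSum_nonneg _ hq, fun vA vB => ?_, ?_⟩
  · rw [setSum_pushWeight, ← hp vA vB]
    congr 1
    ext r
    exact ⟨fun h => ⟨h.1, h.2.2⟩, fun h => ⟨h.1, ⟨r, G.mem_Rh_FB h.1⟩, h.2⟩⟩
  · rw [setSum_pushWeight]
    exact setSum_mono (fun r h => h.2.2 (G.mem_Rh_FB h.1)) hq

theorem exists_response_weight (S : Set G.Resp) (p : G.AAssign → G.BAssign → ℝ)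
    (qh : G.Hyperarc → ℝ) (hqh : ∀ h, 0 ≤ qh h)
    (hp : ∀ vA vB, setSum {h ∈ G.H | h vA = vB} qh = p vA vB) :
    ∃ q : G.Resp → ℝ, (∀ r, 0 ≤ q r) ∧
      (∀ vA vB, setSum (G.RvBvA vA vB) q = p vA vB) ∧
      setSum S q ≤ setSum {h ∈ G.H | G.Rh h ⊆ S} qh := by
  obtain ⟨s, hs⟩ := G.exists_representative S
  refine ⟨pushWeight G.H s qh, fun _ => setSum_nonneg _ hqh, fun vA vB => ?_, ?_⟩
  · rw [setSum_pushWeight, ← hp vA vB]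
    congr 1
    ext h
    refine and_congr_right fun hh => ?_
    have hFB := (hs h hh).1.2 vA
    exact ⟨fun h' => hFB.symm.trans h'.2, fun h' => ⟨(hs h hh).1.1, hFB.trans h'⟩⟩
  · rw [setSum_pushWeight]
    refine setSum_mono ?_ hqh
    rintro h ⟨hh, hsS⟩
    exact ⟨hh, (hs h hh).2 hsS⟩

end CausalGraph

/-- Equivalence of the original and pruned lower-bound LPs: the
optimal value of `min{ Σ_{r∈R_Q} q_r : Σ_{r∈R_{v_B.v_A}} q_r = p_{v_B.v_A} ∀(v_A,v_B), q ≥ 0 }`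
equals that of `min{ Σ_{h∈H} c_h^L q_h : Σ_{h∈H: h(v_A)=v_B} q_h = p_{v_B.v_A} ∀(v_A,v_B), q ≥ 0 }`
with `c_h^L = 1{R_h ⊆ R_Q}`; moreover feasible points of one map to feasible
points of the other with no larger objective value (so feasibility is equivalent). -/
theorem pruned_LP_lower_equiv (G : CausalGraph) (Q : G.Query)
    (p : G.AAssign → G.BAssign → ℝ) :
    (sInf {y : ℝ | ∃ q : G.Resp → ℝ, (∀ r, 0 ≤ q r) ∧
          (∀ (vA : G.AAssign) (vB : G.BAssign), setSum (G.RvBvA vA vB) q = p vA vB) ∧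
          y = setSum (G.RQ Q) q} =
      sInf {y : ℝ | ∃ qh : G.Hyperarc → ℝ, (∀ h, 0 ≤ qh h) ∧
          (∀ (vA : G.AAssign) (vB : G.BAssign),
            setSum {h ∈ G.H | h vA = vB} qh = p vA vB) ∧
          y = setSum {h ∈ G.H | G.Rh h ⊆ G.RQ Q} qh}) ∧
    (∀ q : G.Resp → ℝ, (∀ r, 0 ≤ q r) →
      (∀ (vA : G.AAssign) (vB : G.BAssign), setSum (G.RvBvA vA vB) q = p vA vB) →
      ∃ qh : G.Hyperarc → ℝ, (∀ h, 0 ≤ qh h) ∧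
        (∀ (vA : G.AAssign) (vB : G.BAssign),
          setSum {h ∈ G.H | h vA = vB} qh = p vA vB) ∧
        setSum {h ∈ G.H | G.Rh h ⊆ G.RQ Q} qh ≤ setSum (G.RQ Q) q) ∧
    (∀ qh : G.Hyperarc → ℝ, (∀ h, 0 ≤ qh h) →
      (∀ (vA : G.AAssign) (vB : G.BAssign),
        setSum {h ∈ G.H | h vA = vB} qh = p vA vB) →
      ∃ q : G.Resp → ℝ, (∀ r, 0 ≤ q r) ∧
        (∀ (vA : G.AAssign) (vB : G.BAssign), setSum (G.RvBvA vA vB) q = p vA vB) ∧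
        setSum (G.RQ Q) q ≤ setSum {h ∈ G.H | G.Rh h ⊆ G.RQ Q} qh) := by
  have forward := G.exists_hyperarc_weight (G.RQ Q) p
  have backward := G.exists_response_weight (G.RQ Q) p
  refine ⟨le_antisymm ?_ ?_, forward, backward⟩ <;>
    apply sInf_le_sInf_of_mutual_domination
  case refine_1.hS | refine_2.hS =>
    refine ⟨0, ?_⟩
    rintro _ ⟨q, hq, -, rfl⟩
    exact setSum_nonneg _ hq
  case refine_1.hST | refine_2.hTS =>
    rintro _ ⟨q, hq, hp, rfl⟩
    obtain ⟨qh, hqh, hph, hle⟩ := forward q hq hp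
    exact ⟨_, ⟨qh, hqh, hph, rfl⟩, hle⟩
  case refine_1.hTS | refine_2.hST =>
    rintro _ ⟨qh, hqh, hph, rfl⟩
    obtain ⟨q, hq, hp, hle⟩ := backward qh hqh hph
    exact ⟨_, ⟨q, hq, hp, rfl⟩, hle⟩
end

section
/- For a valid hyperarc h: R_h ∩ R_W = ∅ if, and only if, there exists v ∈ {0,1}^{|N|} such that h(v_A) = v_B, v_{C(W)} = q_{C(W)}, and v_W ≠ q_W. -/
open Classical

open CausalGraph

namespace CausalGraph

/-- Every stage of the evaluation at `j` depends only on the context variables with a directed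
path to `j`. -/
theorem iterate_evalStep_congr_s13 (G : CausalGraph) {r : G.Resp} (hr : r ∈ G.R) {vA wA : G.AAssign}
    (u : Fin G.n → Bool) (k : ℕ) (j : Fin G.n)
    (hvw : ∀ i : G.AIdx, Relation.ReflTransGen G.edge i.1 j → vA i = wA i) :
    (G.evalStep r vA)^[k] u j = (G.evalStep r wA)^[k] u j := by
  induction k generalizing j with
  | zero => rfl
  | succ k ih =>
    rw [Function.iterate_succ_apply', Function.iterate_succ_apply']
    unfold evalStep
    split_ifs with hj
    · exact hvw ⟨j, hj⟩ .refl
    · exact hr j _ _ fun i hi => ih i fun a ha => hvw a (ha.tail hi)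

theorem eval_congr (G : CausalGraph) {r : G.Resp} (hr : r ∈ G.R) {vA wA : G.AAssign}
    (j : Fin G.n) (hvw : ∀ i : G.AIdx, Relation.ReflTransGen G.edge i.1 j → vA i = wA i) :
    G.eval r vA j = G.eval r wA j :=
  G.iterate_evalStep_congr_s13 hr _ _ j hvw

theorem restrictA_extendA (G : CausalGraph) (h : G.Hyperarc) (vA : G.AAssign) :
    G.restrictA (G.extendA h vA) = vA :=
  funext fun i => dif_pos i.2

theorem extendA_apply_B (G : CausalGraph) (h : G.Hyperarc) (vA : G.AAssign) (j : G.BIdx) :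
    G.extendA h vA j.1 = h vA j :=
  dif_neg (not_lt.mpr j.2)

end CausalGraph

/-- for a valid hyperarc `h`: `R_h ∩ R_W = ∅` iff there exists
`v ∈ {0,1}^{|N|}` with `h(v_A) = v_B`, `v_{C(W)} = q_{C(W)}`, and `v_W ≠ q_W`. -/
theorem Rh_disjoint_RW_iff (G : CausalGraph) (Ob : G.Obs)
    (h : G.Hyperarc) (hh : G.Valid h) :
    G.Rh h ∩ G.RW Ob = ∅ ↔ ∃ v : Fin G.n → Bool,
      h (G.restrictA v) = G.restrictB v ∧
      (∀ i : G.AIdx, i.1 ∈ G.criticalW Ob → v i.1 = Ob.qA i) ∧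
      (∃ j ∈ Ob.W, v j ≠ Ob.qW j) := by
  constructor
  · intro hdisj
    obtain ⟨r, hr⟩ := hh
    refine ⟨G.extendA h Ob.qA, ?_, fun i _ => congrFun (G.restrictA_extendA h Ob.qA) i, ?_⟩
    · rw [restrictA_extendA]
      exact funext fun j => (G.extendA_apply_B h Ob.qA j).symm
    · by_contra! hW
      refine Set.eq_empty_iff_forall_notMem.mp hdisj r ⟨hr, hr.1, fun j hj => ?_⟩
      rw [← hW j hj, G.extendA_apply_B h Ob.qA ⟨j, Ob.W_sub j hj⟩, ← hr.2]
      rfl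
  · rintro ⟨v, hv, hC, j, hj, hne⟩
    refine Set.eq_empty_iff_forall_notMem.mpr fun r ⟨hr, hrW⟩ => hne ?_
    calc v j = G.FB r (G.restrictA v) ⟨j, Ob.W_sub j hj⟩ := by rw [hr.2, hv]; rfl
      _ = G.eval r Ob.qA j := G.eval_congr hr.1 j fun i hi => hC i ⟨i.2, j, hj, hi⟩
      _ = Ob.qW j := hrW.2 j hj
end

section
/- Suppose R_Q ∩ R_W ≠ ∅. Then for any valid hyperarc h ∈ H: R_h ∩ (R_Q ∩ R_W) = ∅ if, and only if, either R_h ∩ R_Q = ∅ or R_h ∩ R_W = ∅. -/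
open Classical

open CausalGraph

/-- All responses realizing a given hyperarc agree on any observation, since the observed
variables lie in `V_B`. -/
theorem CausalGraph.Rh_subset_RW_of_nonempty (G : CausalGraph) (Ob : G.Obs) (h : G.Hyperarc)
    (hne : (G.Rh h ∩ G.RW Ob).Nonempty) : G.Rh h ⊆ G.RW Ob := by
  obtain ⟨s, ⟨-, hs⟩, -, hsW⟩ := hne
  rintro r ⟨hrR, hr⟩
  refine ⟨hrR, fun j hj => ?_⟩
  rw [← hsW j hj]
  exact congrFun ((hr Ob.qA).trans (hs Ob.qA).symm) ⟨j, Ob.W_sub j hj⟩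

/-- suppose `R_Q ∩ R_W ≠ ∅`.  Then for any valid hyperarc `h ∈ H`:
`R_h ∩ (R_Q ∩ R_W) = ∅` iff `R_h ∩ R_Q = ∅` or `R_h ∩ R_W = ∅`. -/
theorem Rh_disjoint_RQ_inter_RW_iff (G : CausalGraph) (Q : G.Query) (Ob : G.Obs)
    (hqA : Ob.qA = Q.qA)
    (hI : ∀ i ∈ Q.I, i ∈ G.critical Q)
    (hQW : (G.RQ Q ∩ G.RW Ob).Nonempty)
    (h : G.Hyperarc) (hh : h ∈ G.H) :
    G.Rh h ∩ (G.RQ Q ∩ G.RW Ob) = ∅ ↔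
      (G.Rh h ∩ G.RQ Q = ∅ ∨ G.Rh h ∩ G.RW Ob = ∅) := by
  constructor
  · intro hemp
    by_contra! hne
    obtain ⟨⟨r, hrh, hrQ⟩, hW⟩ := hne
    exact hemp.subset ⟨hrh, hrQ, G.Rh_subset_RW_of_nonempty Ob h hW hrh⟩
  · rintro (hemp | hemp)
    · exact Set.subset_eq_empty (Set.inter_subset_inter_right _ Set.inter_subset_left) hemp
    · exact Set.subset_eq_empty (Set.inter_subset_inter_right _ Set.inter_subset_right) hemp
end
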